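/- Suppose a is contained in the Jacobson radical of R and cd(a,M) = ara(a,M). Then the following are equivalent: (i) M is a-relative generalized Cohen-Macaulay; (ii) there exists a natural number ℓ such that every a-relative system of parameters of M is an a^ℓ-weak sequence on M. -/

import Mathlib

/-!
Formalization of a statement from "A theory of relative generalized Cohen-Macaulay modules"
by Divaani-Aazar, Ghanbari Doust, Tousi and Zakeri.

Throughout, `R` is a commutative Noetherian ring and `M` a finitely generated `R`-module.
Conventions used below:
* `locH I i M` is the local cohomology module `H^i_I(M)` (Mathlib's `localCohomology`).
* Conditions `cd(I,M) = c`, `ara(I,M) = n`, `f_I(M) = f`, `grade(I,M) = r` are expressed by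
  the predicates `IsCd`, `IsAra`, `IsFinDim`, `IsGrade`.
* Sequences are given as functions `Fin r → R`; `pSpan M x i = ⟨x_0,…,x_{i-1}⟩M`.
* Koszul (co)homology is defined via the explicit (co)chain complex on the `p`-element
  subsets of `{0,…,n-1}`, and the canonical map `λ^i` into local cohomology is the structure
  map (at exponent 1) into the direct limit of Koszul cohomologies of powers of the sequence,
  which is the realization of `H^i_{⟨x⟩}(M)` used in the paper (2.1(iv)).
-/

open CategoryTheory

noncomputable section

variable {R : Type} [CommRing R]

/-! ### Sequences: prefix spans, weak sequences, filter regular sequences, d-sequences -/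

/-- `pSpan M x i` is the submodule `⟨x_0, …, x_{i-1}⟩M` of `M`. -/
def pSpan (M : Type) [AddCommGroup M] [Module R M] {r : ℕ} (x : Fin r → R) (i : Fin r) :
    Submodule R M :=
  Ideal.span (x '' {j | j < i}) • (⊤ : Submodule R M)

/-- `x_1, …, x_r` is an `I`-weak sequence on `M`:
`(⟨x_1,…,x_{i-1}⟩M :_M x_i) ⊆ (⟨x_1,…,x_{i-1}⟩M :_M I)` for all `i`. -/
def IsWeakSeq (I : Ideal R) (M : Type) [AddCommGroup M] [Module R M] {r : ℕ}
    (x : Fin r → R) : Prop :=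
  ∀ i : Fin r, ∀ m : M, x i • m ∈ pSpan M x i → ∀ a ∈ I, a • m ∈ pSpan M x i

/-- `x_1, …, x_r` is an `I`-filter regular sequence on `M`:
`(⟨x_1,…,x_{i-1}⟩M :_M x_i) ⊆ ⋃ₜ (⟨x_1,…,x_{i-1}⟩M :_M I^t)` for all `i`. -/
def IsFilterRegSeq (I : Ideal R) (M : Type) [AddCommGroup M] [Module R M] {r : ℕ}
    (x : Fin r → R) : Prop :=
  ∀ i : Fin r, ∀ m : M, x i • m ∈ pSpan M x i →
    ∃ t : ℕ, ∀ a ∈ I ^ t, a • m ∈ pSpan M x i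

/-- An unconditioned `I`-filter regular sequence: filter regular in any order. -/
def IsUncondFilterRegSeq (I : Ideal R) (M : Type) [AddCommGroup M] [Module R M] {r : ℕ}
    (x : Fin r → R) : Prop :=
  ∀ σ : Equiv.Perm (Fin r), IsFilterRegSeq I M (x ∘ σ)

/-- An unconditioned `I`-weak sequence: all positive powers, in any order, form an
`I`-weak sequence. -/
def IsUncondWeakSeq (I : Ideal R) (M : Type) [AddCommGroup M] [Module R M] {r : ℕ}
    (x : Fin r → R) : Prop :=
  ∀ σ : Equiv.Perm (Fin r), ∀ α : Fin r → ℕ, (∀ k, 0 < α k) →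
    IsWeakSeq I M fun k => x (σ k) ^ α k

/-- `x_1, …, x_r` is a d-sequence on `M`:
`(⟨x_1,…,x_{i-1}⟩M :_M x_i x_j) = (⟨x_1,…,x_{i-1}⟩M :_M x_j)` for all `i ≤ j`. -/
def IsDSeq (M : Type) [AddCommGroup M] [Module R M] {r : ℕ} (x : Fin r → R) : Prop :=
  ∀ i j : Fin r, i ≤ j → ∀ m : M,
    ((x i * x j) • m ∈ pSpan M x i ↔ x j • m ∈ pSpan M x i)

/-- An u.s.d-sequence on `M`: all positive powers, in any order, form a d-sequence. -/
def IsUSDSeq (M : Type) [AddCommGroup M] [Module R M] {r : ℕ} (x : Fin r → R) : Prop :=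
  ∀ σ : Equiv.Perm (Fin r), ∀ α : Fin r → ℕ, (∀ k, 0 < α k) →
    IsDSeq M fun k => x (σ k) ^ α k

/-! ### Local cohomology, cohomological dimension, arithmetic rank -/

/-- The `i`-th local cohomology module `H^i_I(M)`. -/
abbrev locH (I : Ideal R) (i : ℕ) (M : Type) [AddCommGroup M] [Module R M] : ModuleCat R :=
  (localCohomology I i).obj (ModuleCat.of R M)

/-- `cd(I, M) = c`: the cohomological dimension of `I` on `M` equals `c`, i.e.
`H^c_I(M) ≠ 0` and `H^i_I(M) = 0` for all `i > c`. -/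
def IsCd (I : Ideal R) (M : Type) [AddCommGroup M] [Module R M] (c : ℕ) : Prop :=
  Nontrivial (locH I c M) ∧ ∀ i : ℕ, c < i → Subsingleton (locH I i M)

/-- `f_I(M) = f`: the `I`-finiteness dimension of `M` equals `f`, i.e. `f` is the least
integer such that `H^f_I(M)` is not finitely generated. -/
def IsFinDim (I : Ideal R) (M : Type) [AddCommGroup M] [Module R M] (f : ℕ) : Prop :=
  (∀ i : ℕ, i < f → Module.Finite R (locH I i M)) ∧ ¬ Module.Finite R (locH I f M)

/-- `M` is `I`-relative generalized Cohen-Macaulay: `cd(I,M) ≤ 0` or `cd(I,M) = f_I(M)`. -/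
def IsRelGCM (I : Ideal R) (M : Type) [AddCommGroup M] [Module R M] : Prop :=
  (∀ i : ℕ, 0 < i → Subsingleton (locH I i M)) ∨
    ∃ c : ℕ, IsCd I M c ∧ IsFinDim I M c

/-- `ara(I, M) = n`: the arithmetic rank of `I` with respect to `M` equals `n`, i.e. `n` is the
least integer such that there are `x_1, …, x_n ∈ R` with
`Rad(⟨x_1,…,x_n⟩ + Ann M) = Rad(I + Ann M)`. -/
def IsAra (I : Ideal R) (M : Type) [AddCommGroup M] [Module R M] (n : ℕ) : Prop :=
  IsLeast {k : ℕ | ∃ x : Fin k → R,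
    (Ideal.span (Set.range x) + Module.annihilator R M).radical
      = (I + Module.annihilator R M).radical} n

/-- `x_1, …, x_c` is an `I`-relative system of parameters of `M` (where `c = cd(I,M)`):
the `x_i` lie in `I` and `Rad(⟨x_1,…,x_c⟩ + Ann M) = Rad(I + Ann M)`. -/
def IsRsop (I : Ideal R) (M : Type) [AddCommGroup M] [Module R M] {c : ℕ}
    (x : Fin c → R) : Prop :=
  (∀ j, x j ∈ I) ∧
    (Ideal.span (Set.range x) + Module.annihilator R M).radical
      = (I + Module.annihilator R M).radical

/-!
Local cohomology is computed as the direct limit of the modules `Extⁱ(R / I ^ t, M)`, so it is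
`I`-power torsion, it has long exact sequences, and it vanishes in positive degrees on `I`-power
torsion modules. Hence, as soon as the kernel of `x : M → M` is `I`-power torsion, there is an exact
sequence `Hⁱ(M) → Hⁱ(M) → Hⁱ(M / xM) → Hⁱ⁺¹(M) → Hⁱ⁺¹(M)` whose outer maps are multiplication
by `x`.

If `Hⁱ(M)` is finitely generated for `i < c`, then a power of `I` kills all these modules, and twice
that power kills `Hⁱ(M / x₁M)` for `i < c - 1`. By induction on `c`, a relative system of parameters
`x₁, …, x_c` is a weak sequence once `0 :_M x₁` is known to be `I`-power torsion. More generally, so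
is every submodule `N` of `M` such that `I` has `c - 1` generators up to radical modulo `Ann N`:
divide out the torsion of `M`, and use prime avoidance to modify the first generator into an
`M`-regular element `w`. By induction the image of `N` in each `M / wⁿM` is torsion, hence killed by
a power of `I` that kills `H¹(M)`, and Krull's intersection theorem shows that this power kills `N`.

Conversely, all positive powers of a relative system of parameters `x₁, …, x_c` form `I ^ ℓ`-weak
sequences, so `I ^ ℓ` kills the kernel of each power of `x₁` on `M`, and inductively on `Hⁱ⁺¹(M)`.
As every element is killed by some power of `x₁`, `I ^ ℓ` kills `Hⁱ(M)` for `i < c`. Multiplication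
by `x₁ ^ (ℓ + 1)` thus vanishes on `Hⁱ⁺¹(M)`, which is then a quotient of the finitely generated
module `Hⁱ(M / x₁ ^ (ℓ + 1) M)`. Finally `x₁` acts surjectively on `H^c(M) ≠ 0`, so by Nakayama's
lemma `H^c(M)` is not finitely generated.
-/

section Exact

variable {R A B D : Type*} [CommRing R] [AddCommGroup A] [Module R A] [AddCommGroup B] [Module R B]
  [AddCommGroup D] [Module R D]

lemma exact_subtype_rangeRestrict (f : A →ₗ[R] B) :
    Function.Exact (LinearMap.ker f).subtype f.rangeRestrict :=
  LinearMap.exact_iff.2 (f.ker_rangeRestrict.trans (Submodule.range_subtype _).symm)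

lemma annihilator_mul_annihilator_le_of_exact {f : A →ₗ[R] B} {g : B →ₗ[R] D}
    (hfg : Function.Exact f g) :
    Module.annihilator R A * Module.annihilator R D ≤ Module.annihilator R B := by
  refine Ideal.mul_le.2 fun r hr s hs ↦ Module.mem_annihilator.2 fun b ↦ ?_
  obtain ⟨a, ha⟩ := (hfg (s • b)).1 (by rw [map_smul, Module.mem_annihilator.1 hs])
  rw [mul_smul, ← ha, ← map_smul, Module.mem_annihilator.1 hr, map_zero]

lemma annihilator_le_annihilator_ker_of_exact {f : A →ₗ[R] B} {g : B →ₗ[R] D}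
    (hfg : Function.Exact f g) :
    Module.annihilator R A ≤ Module.annihilator R (LinearMap.ker g) := by
  rw [hfg.linearMap_ker_eq]
  exact LinearMap.annihilator_le_of_surjective _ f.surjective_rangeRestrict

end Exact

section Torsion

variable {R : Type*} [CommRing R] {I : Ideal R} {M N : Type*} [AddCommGroup M] [Module R M]
  [AddCommGroup N] [Module R N]

lemma mem_primaryComponent_iff {m : M} :
    m ∈ I.primaryComponent M ↔ ∃ t, ∀ r ∈ I ^ t, r • m = 0 := by
  simp only [Ideal.primaryComponent_mem, Submodule.mem_torsionBySet_iff, Subtype.forall,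
    SetLike.mem_coe]

lemma primaryComponent_eq_top_of_le {P : Submodule R M} (hP : P ≤ I.primaryComponent M) :
    I.primaryComponent P = ⊤ := by
  refine (Submodule.eq_top_iff').2 fun m ↦ ?_
  obtain ⟨t, ht⟩ := mem_primaryComponent_iff.1 (hP m.2)
  exact mem_primaryComponent_iff.2 ⟨t, fun r hr ↦ Subtype.ext (ht r hr)⟩

lemma primaryComponent_eq_top_of_surjective {f : M →ₗ[R] N} (hf : Function.Surjective f)
    (hM : I.primaryComponent M = ⊤) : I.primaryComponent N = ⊤ := by
  refine Submodule.eq_top_iff'.2 (hf.forall.2 fun m ↦ ?_)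
  exact I.primaryComponent_map_mem f ⟨m, hM ▸ trivial⟩

lemma exists_pow_le_annihilator [Module.Finite R M] (hM : I.primaryComponent M = ⊤) :
    ∃ t, I ^ t ≤ Module.annihilator R M := by
  have hmono : Monotone fun t ↦ Submodule.torsionBySet R M (I ^ t : Ideal R) := fun s t hst ↦
    Submodule.torsionBySet_le_torsionBySet_of_subset (Ideal.pow_le_pow_right hst)
  have hcompact := (Submodule.fg_iff_compact (⊤ : Submodule R M)).1 Module.Finite.fg_top
  obtain ⟨_, ⟨t, rfl⟩, ht⟩ := hcompact _ _ (Set.range_nonempty _) hmono.directed_le.directedOn_range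
    (isLUB_iSup) hM.ge
  refine ⟨t, fun r hr ↦ Module.mem_annihilator.2 fun m ↦ ?_⟩
  exact (Submodule.mem_torsionBySet_iff _ _).1 (ht (Submodule.mem_top (x := m))) ⟨r, hr⟩

lemma le_annihilator_of_forall_ker_pow {J : Ideal R} {x : R} (hx : x ∈ I)
    (h : ∀ n, 0 < n → J ≤ Module.annihilator R (LinearMap.ker (LinearMap.lsmul R M (x ^ n)))) :
    J ≤ Module.annihilator R (I.primaryComponent M) := by
  refine fun r hr ↦ Submodule.mem_annihilator.2 fun m hm ↦ ?_
  obtain ⟨t, ht⟩ := mem_primaryComponent_iff.1 hm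
  have hxm : x ^ (t + 1) • m = 0 :=
    ht _ (Ideal.pow_le_pow_right t.le_succ (Ideal.pow_mem_pow hx (t + 1)))
  exact congrArg Subtype.val (Module.mem_annihilator.1 (h (t + 1) t.succ_pos hr) ⟨m, hxm⟩)

lemma primaryComponent_quotient_primaryComponent [IsNoetherianRing R] [Module.Finite R M] :
    I.primaryComponent (M ⧸ I.primaryComponent M) = ⊥ := by
  obtain ⟨s, hs⟩ := exists_pow_le_annihilator (primaryComponent_eq_top_of_le
    (le_refl (I.primaryComponent M)))
  refine (Submodule.eq_bot_iff _).2 ((Submodule.mkQ_surjective _).forall.2 fun m hm ↦ ?_)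
  obtain ⟨t, ht⟩ := mem_primaryComponent_iff.1 hm
  refine (Submodule.Quotient.mk_eq_zero _).2 (mem_primaryComponent_iff.2 ⟨s + t, ?_⟩)
  suffices I ^ s * I ^ t ≤ LinearMap.ker (LinearMap.toSpanSingleton R M m) by
    rw [pow_add]; exact this
  refine Ideal.mul_le.2 fun a ha b hb ↦ ?_
  have hbm : b • m ∈ I.primaryComponent M := (Submodule.Quotient.mk_eq_zero _).1 (ht b hb)
  exact (mul_smul a b m).trans
    (congrArg Subtype.val (Module.mem_annihilator.1 (hs ha) ⟨b • m, hbm⟩))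

open scoped Pointwise in
lemma eq_zero_of_forall_mem_pow_smul_top [IsNoetherianRing R] [Module.Finite R M]
    (hI : I ≤ (⊥ : Ideal R).jacobson) {w : R} (hw : w ∈ I) {m : M}
    (hm : ∀ n, m ∈ (w ^ n • ⊤ : Submodule R M)) : m = 0 := by
  rw [← Submodule.mem_bot R, ← Ideal.iInf_pow_smul_eq_bot_of_le_jacobson I hI, Submodule.mem_iInf]
  intro n
  obtain ⟨v, -, hv⟩ := hm n
  exact hv ▸ Submodule.smul_mem_smul (Ideal.pow_mem_pow hw n) trivial

lemma exists_pow_smul_top_le_ker [IsNoetherianRing R] [Module.Finite R M] {P : Submodule R M}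
    {f : P →ₗ[R] N} (hf : LinearMap.range f ≤ I.primaryComponent N) :
    ∃ k, (I ^ k • ⊤ : Submodule R M).comap P.subtype ≤ LinearMap.ker f := by
  obtain ⟨t, ht⟩ := exists_pow_le_annihilator (primaryComponent_eq_top_of_le hf)
  obtain ⟨k, hk⟩ := Ideal.exists_pow_inf_eq_pow_smul I P
  have hker : I ^ t • P ≤ (LinearMap.ker f).map P.subtype :=
    Submodule.smul_le.2 fun r hr m hm ↦ ⟨r • ⟨m, hm⟩, (map_smul f r _).trans <| congrArg Subtype.val
      (Module.mem_annihilator.1 (ht hr) ⟨f ⟨m, hm⟩, LinearMap.mem_range_self f _⟩), rfl⟩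
  refine ⟨t + k, fun m hm ↦ ?_⟩
  have hmP : (m : M) ∈ I ^ (t + k) • ⊤ ⊓ P := ⟨hm, m.2⟩
  rw [hk _ (Nat.le_add_left k t), Nat.add_sub_cancel] at hmP
  obtain ⟨m', hm', h⟩ := hker (Submodule.smul_mono le_rfl inf_le_right hmP)
  rwa [← Subtype.ext h]

universe u v in
lemma injective_primaryComponent {R : Type u} [CommRing R] [IsNoetherianRing R] [Small.{v} R]
    (I : Ideal R) (E : Type v) [AddCommGroup E] [Module R E] [Module.Injective R E] :
    Module.Injective R (I.primaryComponent E) := by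
  refine Module.Baer.injective fun J f ↦ ?_
  obtain ⟨k, hk⟩ := exists_pow_smul_top_le_ker (f := (I.primaryComponent E).subtype ∘ₗ f) (I := I)
    ((LinearMap.range_comp_le_range _ _).trans (Submodule.range_subtype _).le)
  let p : J →ₗ[R] R ⧸ I ^ k := Submodule.mkQ (I ^ k) ∘ₗ J.subtype
  have hp : LinearMap.ker p ≤ LinearMap.ker ((I.primaryComponent E).subtype ∘ₗ f) := by
    refine fun x hx ↦ hk ?_
    simpa [p, Ideal.Quotient.eq_zero_iff_mem] using hx
  obtain ⟨h, hh⟩ := (Module.Baer.of_injective ‹Module.Injective R E›).extension_property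
    ((LinearMap.ker p).liftQ p le_rfl)
    (LinearMap.ker_eq_bot.1 (Submodule.ker_liftQ_eq_bot _ _ _ le_rfl))
    ((LinearMap.ker p).liftQ _ hp)
  have hmem (r : R) : h (Submodule.mkQ (I ^ k) r) ∈ I.primaryComponent E := by
    refine mem_primaryComponent_iff.2 ⟨k, fun s hs ↦ ?_⟩
    have hsr : Submodule.mkQ (I ^ k) (s • r) = 0 :=
      (Submodule.Quotient.mk_eq_zero _).2 (Ideal.mul_mem_right _ _ hs)
    rw [← map_smul, ← map_smul, hsr, map_zero]
  exact ⟨(h ∘ₗ Submodule.mkQ (I ^ k)).codRestrict _ hmem, fun x hx ↦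
    Subtype.ext (LinearMap.congr_fun hh (Submodule.Quotient.mk ⟨x, hx⟩))⟩

lemma exists_injective_of_primaryComponent_eq_top {R : Type} [CommRing R] [IsNoetherianRing R]
    {I : Ideal R} {N : Type} [AddCommGroup N] [Module R N] (hN : I.primaryComponent N = ⊤) :
    ∃ (E : Type) (_ : AddCommGroup E) (_ : Module R E) (_ : Module.Injective R E)
      (_ : I.primaryComponent E = ⊤) (f : N →ₗ[R] E), Function.Injective f := by
  let E : ModuleCat.{0} R := Injective.under (ModuleCat.of R N)
  have hE : Injective E := inferInstance
  have := Module.injective_module_of_injective_object R E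
  let f : N →ₗ[R] E := (Injective.ι (ModuleCat.of R N)).hom
  have hf : Function.Injective f := (ModuleCat.mono_iff_injective _).1 inferInstance
  have hmem (m : N) : f m ∈ I.primaryComponent E := I.primaryComponent_map_mem f ⟨m, hN ▸ trivial⟩
  exact ⟨I.primaryComponent E, _, _, injective_primaryComponent I E,
    primaryComponent_eq_top_of_le le_rfl, f.codRestrict _ hmem, fun _ _ h ↦
      hf (congrArg Subtype.val h)⟩

end Torsion

section PrimeAvoidance

variable {R : Type*} [CommRing R] {A : Ideal R}

/- By induction `y + a` avoids all of `S` but a minimal element `P`; if it lies in `P`, correct `a`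
by an element of `A` that lies in all the other primes but not in `P`. -/
lemma exists_mem_forall_add_notMem (y : R) (S : Finset (Ideal R)) (hS : ∀ P ∈ S, P.IsPrime)
    (hA : ∀ P ∈ S, y ∈ P → ¬ A ≤ P) : ∃ a ∈ A, ∀ P ∈ S, y + a ∉ P := by
  classical
  induction S using Finset.strongInduction with
  | H S ih =>
  obtain rfl | hne := S.eq_empty_or_nonempty
  · exact ⟨0, A.zero_mem, by simp⟩
  obtain ⟨P, hP, hmin⟩ := S.exists_minimal hne
  obtain ⟨a, ha, haS⟩ := ih (S.erase P) (Finset.erase_ssubset hP)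
    (fun Q hQ ↦ hS Q (Finset.mem_of_mem_erase hQ)) fun Q hQ ↦ hA Q (Finset.mem_of_mem_erase hQ)
  by_cases haP : y + a ∉ P
  · exact ⟨a, ha, fun Q hQ ↦ (eq_or_ne Q P).elim (· ▸ haP) fun hQP ↦
      haS Q (Finset.mem_erase.2 ⟨hQP, hQ⟩)⟩
  rw [not_not] at haP
  have hnle : ¬ A ⊓ (S.erase P).inf id ≤ P := by
    have := hS P hP
    rw [Ideal.IsPrime.inf_le this, Ideal.IsPrime.inf_le' this]
    rintro (hAP | ⟨Q, hQ, hQP⟩)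
    · exact hA P hP ((P.add_mem_iff_left (hAP ha)).1 haP) hAP
    · exact Finset.ne_of_mem_erase hQ (hQP.antisymm (hmin (Finset.mem_of_mem_erase hQ) hQP))
  obtain ⟨b, ⟨hbA, hbS⟩, hbP⟩ := SetLike.not_le_iff_exists.1 hnle
  refine ⟨a + b, A.add_mem ha hbA, fun Q hQ hmem ↦ ?_⟩
  rw [← add_assoc] at hmem
  obtain rfl | hQP := eq_or_ne Q P
  · exact hbP ((Q.add_mem_iff_right haP).1 hmem)
  · have hQ' := Finset.mem_erase.2 ⟨hQP, hQ⟩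
    exact haS Q hQ' ((Q.add_mem_iff_left ((Finset.inf_le hQ' : _ ≤ id Q) hbS)).1 hmem)

variable [IsNoetherianRing R] {I : Ideal R} {M : Type*} [AddCommGroup M] [Module R M]

lemma not_le_of_mem_associatedPrimes (hM : I.primaryComponent M = ⊥) {P : Ideal R}
    (hP : P ∈ associatedPrimes R M) : ¬ I ≤ P := by
  intro hIP
  obtain ⟨hprime, m, rfl⟩ := isAssociatedPrime_iff.1 hP
  have hm : m ∈ I.primaryComponent M := mem_primaryComponent_iff.2 ⟨1, fun r hr ↦
    Submodule.mem_colon_singleton.1 (hIP (pow_one I ▸ hr))⟩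
  rw [hM, Submodule.mem_bot] at hm
  exact hprime.ne_top (by simp [hm])

lemma exists_isSMulRegular_add [Module.Finite R M] (hM : I.primaryComponent M = ⊥) {y : R}
    (hI : I ≤ (Ideal.span {y} ⊔ A).radical) : ∃ a ∈ A, IsSMulRegular M (y + a) := by
  have hfin := associatedPrimes.finite R M
  obtain ⟨a, ha, haP⟩ := exists_mem_forall_add_notMem (A := A) y hfin.toFinset
    (fun P hP ↦ (hfin.mem_toFinset.1 hP).isPrime) fun P hP hyP hAP ↦
      not_le_of_mem_associatedPrimes hM (hfin.mem_toFinset.1 hP) <|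
        hI.trans ((hfin.mem_toFinset.1 hP).isPrime.radical_le_iff.2
          (sup_le ((Ideal.span_singleton_le_iff_mem P).2 hyP) hAP))
  refine ⟨a, ha, ?_⟩
  have hmem : y + a ∈ (⋃ P ∈ associatedPrimes R M, (P : Set R))ᶜ := by
    simpa [Set.mem_iUnion₂] using haP
  rwa [biUnion_associatedPrimes_eq_compl_regular, compl_compl] at hmem

end PrimeAvoidance

section ExtComparison

open Opposite Limits Abelian

universe v u w

variable {k : Type w} [CommRing k] {C : Type u} [Category.{v} C] [Abelian C] [Linear k C]

lemma extMk_zero_eq_zero_iff [HasExt.{v} C] {X Y : C} (P : ProjectiveResolution X)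
    (f : P.complex.X 0 ⟶ Y) (hf : P.complex.d 1 0 ≫ f = 0) :
    P.extMk f 1 rfl hf = 0 ↔ f = 0 := by
  refine ⟨fun h ↦ ?_, fun h ↦ by simp [h]⟩
  have hX : IsZero (P.cochainComplex.X 1) := P.cochainComplex.isZero_of_isStrictlyLE 0 1
  rw [← P.extEquivCohomologyClass.apply_eq_iff_eq, P.extEquivCohomologyClass_extMk,
    P.extEquivCohomologyClass_zero,
    CochainComplex.HomComplex.CohomologyClass.mk_eq_zero_iff,
    CochainComplex.HomComplex.Cocycle.toSingleMk_mem_coboundaries_iff _ _ _ _ _ 1 (by simp)] at h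
  obtain ⟨g, hg⟩ := h
  rw [hX.eq_of_src g 0, comp_zero] at hg
  rw [← cancel_epi (P.cochainComplexXIso (-(0 : ℕ)) 0 rfl).hom, ← hg, comp_zero]

variable (k) in
/-- The map of cochain complexes `Hom(L, Y) ⟶ Hom(K, Y)` given by precomposition with a map of
chain complexes `K ⟶ L`. -/
def linearYonedaPrecomp {K L : ChainComplex C ℕ} (l : K ⟶ L) (Y : C) :
    L.linearYonedaObj k Y ⟶ K.linearYonedaObj k Y where
  f i := ModuleCat.ofHom (Linear.leftComp k Y (l.f i))
  comm' i j _ := by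
    refine ModuleCat.hom_ext (LinearMap.ext fun (φ : L.X i ⟶ Y) ↦ ?_)
    exact (l.comm_assoc j i φ).symm

variable (k) in
/-- The map of cochain complexes `Hom(K, Y) ⟶ Hom(K, Y')` given by postcomposition with `Y ⟶ Y'`. -/
def linearYonedaPostcomp (K : ChainComplex C ℕ) {Y Y' : C} (g : Y ⟶ Y') :
    K.linearYonedaObj k Y ⟶ K.linearYonedaObj k Y' where
  f i := ModuleCat.ofHom (Linear.rightComp k (K.X i) g)
  comm' i j _ := by
    refine ModuleCat.hom_ext (LinearMap.ext fun (φ : K.X i ⟶ Y) ↦ ?_)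
    exact (Category.assoc (K.d j i) φ g).symm

variable (k) in
/-- The morphism `K.X n ⟶ Y` underlying an `n`-cocycle of `Hom(K, Y)`. -/
def cocycleHom (K : ChainComplex C ℕ) (Y : C) (n : ℕ) :
    (K.linearYonedaObj k Y).cycles n →ₗ[k] (K.X n ⟶ Y) :=
  ((K.linearYonedaObj k Y).iCycles n).hom

lemma d_comp_cocycleHom {K : ChainComplex C ℕ} {Y : C} {n : ℕ}
    (z : (K.linearYonedaObj k Y).cycles n) : K.d (n + 1) n ≫ cocycleHom k K Y n z = 0 :=
  ConcreteCategory.congr_hom ((K.linearYonedaObj k Y).iCycles_d n (n + 1)) z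

lemma cocycleHom_injective (K : ChainComplex C ℕ) (Y : C) (n : ℕ) :
    Function.Injective (cocycleHom k K Y n) :=
  (ModuleCat.mono_iff_injective ((K.linearYonedaObj k Y).iCycles n)).1 inferInstance

lemma exists_cocycleHom_eq {K : ChainComplex C ℕ} {Y : C} {n : ℕ} (f : K.X n ⟶ Y)
    (hf : K.d (n + 1) n ≫ f = 0) : ∃ z, cocycleHom k K Y n z = f := by
  have hex : (ShortComplex.mk _ _ ((K.linearYonedaObj k Y).iCycles_d n (n + 1))).Exact :=
    ShortComplex.exact_of_f_is_kernel _
      ((K.linearYonedaObj k Y).cyclesIsKernel n (n + 1) (by simp))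
  exact (ShortComplex.moduleCat_exact_iff _).1 hex f hf

lemma homologyπ_eq_zero_iff {K : ChainComplex C ℕ} {Y : C} {n : ℕ}
    (z : (K.linearYonedaObj k Y).cycles n) :
    (K.linearYonedaObj k Y).homologyπ n z = 0 ↔
      ∃ g, K.d n ((ComplexShape.up ℕ).prev n) ≫ g = cocycleHom k K Y n z := by
  let L := K.linearYonedaObj k Y
  have hex : (ShortComplex.mk _ _ (L.toCycles_comp_homologyπ _ n)).Exact :=
    ShortComplex.exact_of_g_is_cokernel _ (L.homologyIsCokernel _ n rfl)
  have hi (g) : cocycleHom k K Y n (L.toCycles _ n g) = K.d n _ ≫ g :=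
    ConcreteCategory.congr_hom (L.toCycles_i ((ComplexShape.up ℕ).prev n) n) g
  refine ⟨fun h ↦ ?_, fun ⟨g, hg⟩ ↦ ?_⟩
  · obtain ⟨g, rfl⟩ := (ShortComplex.moduleCat_exact_iff _).1 hex z h
    exact ⟨g, (hi g).symm⟩
  · rw [← cocycleHom_injective K Y n ((hi g).trans hg)]
    exact ConcreteCategory.congr_hom (L.toCycles_comp_homologyπ _ n) g

lemma homologyπ_surjective (K : ChainComplex C ℕ) (Y : C) (n : ℕ) :
    Function.Surjective ((K.linearYonedaObj k Y).homologyπ n).hom :=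
  (ModuleCat.epi_iff_surjective _).1 inferInstance

/-- The isomorphism between the targets of two surjections with the same kernel. -/
def linearEquivOfKerEq {A B B' : Type*} [AddCommGroup A] [AddCommGroup B] [AddCommGroup B']
    [Module k A] [Module k B] [Module k B'] {f : A →ₗ[k] B} {g : A →ₗ[k] B'}
    (hf : Function.Surjective f) (hg : Function.Surjective g)
    (h : LinearMap.ker f = LinearMap.ker g) : B ≃ₗ[k] B' :=
  (f.quotKerEquivOfSurjective hf).symm ≪≫ₗ Submodule.quotEquivOfEq _ _ h ≪≫ₗ
    g.quotKerEquivOfSurjective hg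

lemma linearEquivOfKerEq_apply {A B B' : Type*} [AddCommGroup A] [AddCommGroup B]
    [AddCommGroup B'] [Module k A] [Module k B] [Module k B'] {f : A →ₗ[k] B} {g : A →ₗ[k] B'}
    (hf : Function.Surjective f) (hg : Function.Surjective g)
    (h : LinearMap.ker f = LinearMap.ker g) (a : A) : linearEquivOfKerEq hf hg h (f a) = g a := by
  have e : (f.quotKerEquivOfSurjective hf).symm (f a) = Submodule.Quotient.mk a :=
    (LinearEquiv.symm_apply_eq _).2 rfl
  rw [linearEquivOfKerEq, LinearEquiv.trans_apply, LinearEquiv.trans_apply, e]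
  rfl

section

variable [HasExt.{v} C]

variable (k) in
/-- The class in `Ext X Y n` of an `n`-cocycle of `Hom(P, Y)`, for a projective resolution `P` of
`X`. -/
def extOfCocycle {X : C} (P : ProjectiveResolution X) (Y : C) (n : ℕ) :
    (P.complex.linearYonedaObj k Y).cycles n →ₗ[k] Abelian.Ext X Y n where
  toFun z := P.extMk (cocycleHom k _ Y n z) (n + 1) rfl (d_comp_cocycleHom z)
  map_add' z z' := by simp only [map_add, P.add_extMk]
  map_smul' r z := by
    simp [Ext.smul_eq_comp_mk₀, P.extMk_comp_mk₀]

lemma extOfCocycle_surjective {X : C} (P : ProjectiveResolution X) (Y : C) (n : ℕ) :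
    Function.Surjective (extOfCocycle k P Y n) := by
  intro x
  obtain ⟨f, hf, rfl⟩ := P.extMk_surjective x (n + 1) rfl
  obtain ⟨z, rfl⟩ := exists_cocycleHom_eq (k := k) f hf
  exact ⟨z, rfl⟩

lemma ker_extOfCocycle {X : C} (P : ProjectiveResolution X) (Y : C) (n : ℕ) :
    LinearMap.ker (extOfCocycle k P Y n) =
      LinearMap.ker ((P.complex.linearYonedaObj k Y).homologyπ n).hom := by
  ext z
  rw [LinearMap.mem_ker, LinearMap.mem_ker, homologyπ_eq_zero_iff]
  cases n with
  | zero =>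
    have hd : P.complex.d 0 ((ComplexShape.up ℕ).prev 0) = 0 := P.complex.shape _ _ (by simp)
    simp only [hd, zero_comp, exists_const]
    exact (extMk_zero_eq_zero_iff P _ (d_comp_cocycleHom z)).trans eq_comm
  | succ n =>
    rw [CochainComplex.prev_nat_succ]
    exact P.extMk_eq_zero_iff _ _ rfl (d_comp_cocycleHom z) n rfl

variable (k) in
/-- The comparison isomorphism between the cohomology of `Hom(P, Y)` and Yoneda's `Ext X Y n`, for
a projective resolution `P` of `X`. -/
def homologyEquivExt {X : C} (P : ProjectiveResolution X) (Y : C) (n : ℕ) :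
    (P.complex.linearYonedaObj k Y).homology n ≃ₗ[k] Abelian.Ext X Y n :=
  linearEquivOfKerEq (homologyπ_surjective P.complex Y n) (extOfCocycle_surjective P Y n)
    (ker_extOfCocycle P Y n).symm

lemma homologyEquivExt_homologyMap_precomp {X X' : C} (P : ProjectiveResolution X)
    (Q : ProjectiveResolution X') {f : X' ⟶ X} (φ : ProjectiveResolution.Hom Q P f) (Y : C)
    (n : ℕ) (h : (P.complex.linearYonedaObj k Y).homology n) :
    homologyEquivExt k Q Y n
        (HomologicalComplex.homologyMap (linearYonedaPrecomp k φ.hom Y) n h) =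
      (Ext.mk₀ f).comp (homologyEquivExt k P Y n h) (zero_add n) := by
  obtain ⟨z, rfl⟩ := homologyπ_surjective P.complex Y n h
  let l := linearYonedaPrecomp k φ.hom Y
  have hz : cocycleHom k Q.complex Y n (HomologicalComplex.cyclesMap l n z) =
      φ.hom.f n ≫ cocycleHom k P.complex Y n z :=
    ConcreteCategory.congr_hom (HomologicalComplex.cyclesMap_i l n) z
  have hπ : HomologicalComplex.homologyMap l n
        ((P.complex.linearYonedaObj k Y).homologyπ n z) =
      (Q.complex.linearYonedaObj k Y).homologyπ n (HomologicalComplex.cyclesMap l n z) :=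
    ConcreteCategory.congr_hom (HomologicalComplex.homologyπ_naturality l n) z
  have hP : homologyEquivExt k P Y n ((P.complex.linearYonedaObj k Y).homologyπ n z) =
      extOfCocycle k P Y n z :=
    linearEquivOfKerEq_apply ..
  refine (congrArg _ hπ).trans ((linearEquivOfKerEq_apply ..).trans (Eq.trans ?_
    (congrArg (fun x ↦ (Ext.mk₀ f).comp x (zero_add n)) hP.symm)))
  simp only [extOfCocycle, LinearMap.coe_mk, AddHom.coe_mk, hz]
  exact (ProjectiveResolution.mk₀_comp_extMk _ _ rfl (d_comp_cocycleHom z) φ).symm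

lemma homologyEquivExt_homologyMap_postcomp {X Y Y' : C} (P : ProjectiveResolution X) (g : Y ⟶ Y')
    (n : ℕ) (h : (P.complex.linearYonedaObj k Y).homology n) :
    homologyEquivExt k P Y' n
        (HomologicalComplex.homologyMap (linearYonedaPostcomp k P.complex g) n h) =
      (homologyEquivExt k P Y n h).comp (Ext.mk₀ g) (add_zero n) := by
  obtain ⟨z, rfl⟩ := homologyπ_surjective P.complex Y n h
  let l := linearYonedaPostcomp k P.complex g
  have hz : cocycleHom k P.complex Y' n (HomologicalComplex.cyclesMap l n z) =
      cocycleHom k P.complex Y n z ≫ g :=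
    ConcreteCategory.congr_hom (HomologicalComplex.cyclesMap_i l n) z
  have hπ : HomologicalComplex.homologyMap l n
        ((P.complex.linearYonedaObj k Y).homologyπ n z) =
      (P.complex.linearYonedaObj k Y').homologyπ n (HomologicalComplex.cyclesMap l n z) :=
    ConcreteCategory.congr_hom (HomologicalComplex.homologyπ_naturality l n) z
  have hP : homologyEquivExt k P Y n ((P.complex.linearYonedaObj k Y).homologyπ n z) =
      extOfCocycle k P Y n z :=
    linearEquivOfKerEq_apply ..
  refine (congrArg _ hπ).trans ((linearEquivOfKerEq_apply ..).trans (Eq.trans ?_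
    (congrArg (fun x ↦ x.comp (Ext.mk₀ g) (add_zero n)) hP.symm)))
  simp only [extOfCocycle, LinearMap.coe_mk, AddHom.coe_mk, hz]
  exact (P.extMk_comp_mk₀ _ _ rfl (d_comp_cocycleHom z) g).symm

end

variable [EnoughProjectives C]

lemma isoExt_hom_naturality_left {X X' : C} (P : ProjectiveResolution X)
    (Q : ProjectiveResolution X') {f : X' ⟶ X} (φ : ProjectiveResolution.Hom Q P f) (Y : C)
    (n : ℕ) :
    ((Ext k C n).map f.op).app Y ≫ (Q.isoExt n Y).hom = (P.isoExt n Y).hom ≫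
      HomologicalComplex.homologyMap (linearYonedaPrecomp k φ.hom Y) n := by
  let F := ((linearYoneda k C).obj Y).rightOp
  have h₁ := CommSq.horiz_inv
    ⟨(HomologicalComplex.homologyOp_hom_naturality (linearYonedaPrecomp k φ.hom Y) n).symm⟩
  have h₂ := CommSq.horiz_inv ⟨(ProjectiveResolution.isoLeftDerivedObj_hom_naturality f Q P φ.hom
    (by simpa using φ.hom_f_zero_comp_π_f_zero) F n).symm⟩
  exact Quiver.Hom.op_inj (h₁.horiz_comp h₂).w

lemma isoExt_hom_naturality_right {X Y Y' : C} (P : ProjectiveResolution X) (g : Y ⟶ Y')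
    (n : ℕ) :
    ((Ext k C n).obj (op X)).map g ≫ (P.isoExt n Y').hom = (P.isoExt n Y).hom ≫
      HomologicalComplex.homologyMap (linearYonedaPostcomp k P.complex g) n := by
  have h₁ := CommSq.horiz_inv
    ⟨(HomologicalComplex.homologyOp_hom_naturality (linearYonedaPostcomp k P.complex g) n).symm⟩
  have h₂ := CommSq.mk ((Iso.inv_comp_eq _).2
    (P.leftDerived_app_eq (NatTrans.rightOp ((linearYoneda k C).map g)) n))
  exact Quiver.Hom.op_inj (h₁.horiz_comp h₂).w

variable (k) in
/-- The comparison isomorphism between the derived functor `Ext` and Yoneda's `Ext`. -/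
def extEquiv [HasExt.{v} C] (X Y : C) (n : ℕ) :
    ((Ext k C n).obj (op X)).obj Y ≃ₗ[k] Abelian.Ext X Y n :=
  ((projectiveResolution X).isoExt n Y).toLinearEquiv ≪≫ₗ
    homologyEquivExt k (projectiveResolution X) Y n

lemma extEquiv_naturality_left [HasExt.{v} C] {X X' : C} (f : X' ⟶ X) (Y : C) (n : ℕ)
    (e : ((Ext k C n).obj (op X)).obj Y) :
    extEquiv k X' Y n (((Ext k C n).map f.op).app Y e) =
      (Ext.mk₀ f).comp (extEquiv k X Y n e) (zero_add n) := by
  let P := projectiveResolution X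
  let Q := projectiveResolution X'
  let φ : ProjectiveResolution.Hom Q P f :=
    ⟨ProjectiveResolution.lift f Q P,
      (ProjectiveResolution.lift_commutes_zero f Q P).trans (by simp)⟩
  have h := ConcreteCategory.congr_hom (isoExt_hom_naturality_left P Q φ Y n (k := k)) e
  exact (congrArg (homologyEquivExt k Q Y n) h).trans
    (homologyEquivExt_homologyMap_precomp P Q φ Y n _)

lemma extEquiv_naturality_right [HasExt.{v} C] (X : C) {Y Y' : C} (g : Y ⟶ Y') (n : ℕ)
    (e : ((Ext k C n).obj (op X)).obj Y) :
    extEquiv k X Y' n (((Ext k C n).obj (op X)).map g e) =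
      (extEquiv k X Y n e).comp (Ext.mk₀ g) (add_zero n) := by
  let P := projectiveResolution X
  have h := ConcreteCategory.congr_hom (isoExt_hom_naturality_right P g n (k := k)) e
  exact (congrArg (homologyEquivExt k P Y' n) h).trans
    (homologyEquivExt_homologyMap_postcomp P g n _)

end ExtComparison

section LocalCohomology

open Opposite Limits Abelian

variable (I : Ideal R)

/-- The `R`-module `R / I ^ t`. -/
abbrev quotPow (t : ℕ) : ModuleCat.{0} R := ModuleCat.of R (R ⧸ I ^ t)

/-- The projection `R / I ^ s ⟶ R / I ^ t` for `t ≤ s`. -/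
def quotPowHom {s t : ℕ} (h : t ≤ s) : quotPow I s ⟶ quotPow I t :=
  ModuleCat.ofHom (Submodule.mapQ _ _ LinearMap.id (Ideal.pow_le_pow_right h))

lemma smul_id_quotPow {t : ℕ} {r : R} (hr : r ∈ I ^ t) : r • 𝟙 (quotPow I t) = 0 := by
  refine ModuleCat.hom_ext (LinearMap.ext fun y ↦ ?_)
  obtain ⟨b, rfl⟩ := Submodule.Quotient.mk_surjective _ y
  exact (Submodule.Quotient.mk_eq_zero _).2 ((I ^ t).mul_mem_right b hr)

/-- The direct system of the functors `Extⁿ(R / I ^ t, -)`, whose colimit is `Hⁿ_I`. -/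
abbrev extSystem (n : ℕ) : ℕᵒᵖᵒᵖ ⥤ ModuleCat.{0} R ⥤ ModuleCat.{0} R :=
  localCohomology.diagram (localCohomology.idealPowersDiagram I) n

namespace locH

/-- The structure map `Extⁿ(R / I ^ t, Y) → Hⁿ_I(Y)` of the direct limit defining local
cohomology. -/
def ofExt (Y : ModuleCat.{0} R) (n t : ℕ) :
    Abelian.Ext (quotPow I t) Y n →ₗ[R] (localCohomology I n).obj Y :=
  ((colimit.ι (extSystem I n) (op (op t))).app Y).hom ∘ₗ
    (extEquiv R (quotPow I t) Y n).symm.toLinearMap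

/-- Local cohomology of a fixed module as a direct limit of modules. -/
def isColimit (Y : ModuleCat.{0} R) (n : ℕ) :
    IsColimit (((evaluation _ _).obj Y).mapCocone (colimit.cocone (extSystem I n))) :=
  isColimitOfPreserves _ (colimit.isColimit (extSystem I n))

variable {I}

lemma ofExt_extEquiv {Y : ModuleCat.{0} R} {n t : ℕ}
    (e : ((Ext R (ModuleCat.{0} R) n).obj (op (quotPow I t))).obj Y) :
    ofExt I Y n t (extEquiv R (quotPow I t) Y n e) =
      (colimit.ι (extSystem I n) (op (op t))).app Y e :=
  congrArg _ ((extEquiv R (quotPow I t) Y n).symm_apply_apply e)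

lemma exists_ofExt_eq {Y : ModuleCat.{0} R} {n : ℕ} (z : (localCohomology I n).obj Y) :
    ∃ t x, ofExt I Y n t x = z := by
  obtain ⟨j, e, he⟩ := Concrete.isColimit_exists_rep _ (isColimit I Y n) z
  exact ⟨j.unop.unop, extEquiv R _ Y n e, (ofExt_extEquiv e).trans he⟩

lemma ofExt_comp {Y : ModuleCat.{0} R} {n s t : ℕ} (h : t ≤ s)
    (x : Abelian.Ext (quotPow I t) Y n) :
    ofExt I Y n s ((Ext.mk₀ (quotPowHom I h)).comp x (zero_add n)) = ofExt I Y n t x := by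
  obtain ⟨e, rfl⟩ := (extEquiv R (quotPow I t) Y n).surjective x
  rw [← extEquiv_naturality_left, ofExt_extEquiv, ofExt_extEquiv]
  exact ConcreteCategory.congr_hom (congr_app (colimit.w (extSystem I n) (homOfLE h).op.op) Y) e

lemma exists_comp_eq_zero {Y : ModuleCat.{0} R} {n t : ℕ} {x : Abelian.Ext (quotPow I t) Y n}
    (hx : ofExt I Y n t x = 0) : ∃ s, ∃ h : t ≤ s,
      (Ext.mk₀ (quotPowHom I h)).comp x (zero_add n) = 0 := by
  obtain ⟨e, rfl⟩ := (extEquiv R (quotPow I t) Y n).surjective x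
  rw [ofExt_extEquiv] at hx
  obtain ⟨j, f, g, hfg⟩ := Concrete.isColimit_exists_of_rep_eq _ (isColimit I Y n)
    (i := op (op t)) (j := op (op t)) e 0 (hx.trans (map_zero _).symm)
  rw [map_zero] at hfg
  refine ⟨j.unop.unop, f.unop.unop.down.down, ?_⟩
  rw [← extEquiv_naturality_left, ← map_zero (extEquiv R _ Y n)]
  exact congrArg _ hfg

lemma map_ofExt {Y Y' : ModuleCat.{0} R} (g : Y ⟶ Y') {n t : ℕ}
    (x : Abelian.Ext (quotPow I t) Y n) :
    (localCohomology I n).map g (ofExt I Y n t x) =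
      ofExt I Y' n t (x.comp (Ext.mk₀ g) (add_zero n)) := by
  obtain ⟨e, rfl⟩ := (extEquiv R (quotPow I t) Y n).surjective x
  rw [← extEquiv_naturality_right, ofExt_extEquiv, ofExt_extEquiv]
  exact (ConcreteCategory.congr_hom
    ((colimit.ι (extSystem I n) (op (op t))).naturality g) e).symm

/-- The linear map out of local cohomology induced by a compatible family of linear maps out of
`Extⁿ(R / I ^ t, Y)`. -/
def desc {Y : ModuleCat.{0} R} {n : ℕ} {N : Type} [AddCommGroup N] [Module R N]
    (f : ∀ t, Abelian.Ext (quotPow I t) Y n →ₗ[R] N)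
    (hf : ∀ ⦃s t : ℕ⦄ (h : t ≤ s) (x : Abelian.Ext (quotPow I t) Y n),
      f s ((Ext.mk₀ (quotPowHom I h)).comp x (zero_add n)) = f t x) :
    (localCohomology I n).obj Y →ₗ[R] N :=
  ((isColimit I Y n).desc
    { pt := ModuleCat.of R N
      ι :=
        { app j := ModuleCat.ofHom
            (f j.unop.unop ∘ₗ (extEquiv R (quotPow I j.unop.unop) Y n).toLinearMap)
          naturality i j φ := by
            refine ModuleCat.hom_ext (LinearMap.ext fun e ↦ ?_)
            exact (congrArg (f j.unop.unop) (extEquiv_naturality_left _ _ _ _)).trans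
              (hf φ.unop.unop.down.down _) } }).hom

lemma desc_ofExt {Y : ModuleCat.{0} R} {n : ℕ} {N : Type} [AddCommGroup N] [Module R N]
    (f : ∀ t, Abelian.Ext (quotPow I t) Y n →ₗ[R] N)
    (hf : ∀ ⦃s t : ℕ⦄ (h : t ≤ s) (x : Abelian.Ext (quotPow I t) Y n),
      f s ((Ext.mk₀ (quotPowHom I h)).comp x (zero_add n)) = f t x) (t : ℕ)
    (x : Abelian.Ext (quotPow I t) Y n) : desc f hf (ofExt I Y n t x) = f t x := by
  obtain ⟨e, rfl⟩ := (extEquiv R (quotPow I t) Y n).surjective x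
  rw [ofExt_extEquiv]
  exact ConcreteCategory.congr_hom ((isColimit I Y n).fac _ (op (op t))) e

lemma primaryComponent_eq_top (Y : ModuleCat.{0} R) (n : ℕ) :
    I.primaryComponent ((localCohomology I n).obj Y) = ⊤ := by
  refine Submodule.eq_top_iff'.2 fun z ↦ ?_
  obtain ⟨t, x, rfl⟩ := exists_ofExt_eq z
  refine mem_primaryComponent_iff.2 ⟨t, fun r hr ↦ ?_⟩
  have hx : r • x = (Ext.mk₀ (r • 𝟙 (quotPow I t))).comp x (zero_add n) := by
    rw [Ext.mk₀_smul, Ext.smul_comp, Ext.mk₀_id_comp]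
  rw [← map_smul, hx, smul_id_quotPow I hr, Ext.mk₀_zero, Ext.zero_comp, map_zero]

/-- The Yoneda product `Hⁿ_I(Y) → Hⁿ⁺ᵃ_I(Y')` with a class in `Extᵃ(Y, Y')`. -/
def yonedaProduct {Y Y' : ModuleCat.{0} R} {a : ℕ} (α : Abelian.Ext Y Y' a) (n : ℕ) :
    (localCohomology I n).obj Y →ₗ[R] (localCohomology I (n + a)).obj Y' :=
  desc (fun t ↦ ofExt I Y' (n + a) t ∘ₗ α.postcompOfLinear R (quotPow I t) rfl) fun s t h x ↦ by
    have hα := Ext.comp_assoc (Ext.mk₀ (quotPowHom I h)) x α (zero_add n) rfl (by rw [zero_add])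
    exact (congrArg (ofExt I Y' (n + a) _) hα).trans (ofExt_comp h (x.comp α rfl))

lemma yonedaProduct_ofExt {Y Y' : ModuleCat.{0} R} {a : ℕ} (α : Abelian.Ext Y Y' a) {n t : ℕ}
    (x : Abelian.Ext (quotPow I t) Y n) :
    yonedaProduct α n (ofExt I Y n t x) = ofExt I Y' (n + a) t (x.comp α rfl) :=
  desc_ofExt ..

variable {A B D : Type} [AddCommGroup A] [Module R A] [AddCommGroup B] [Module R B]
  [AddCommGroup D] [Module R D]

variable (I) in
/-- The map on local cohomology induced by a linear map. -/
def map (n : ℕ) (f : A →ₗ[R] B) : locH I n A →ₗ[R] locH I n B :=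
  ((localCohomology I n).map (ModuleCat.ofHom f)).hom

lemma map_comp (n : ℕ) (g : B →ₗ[R] D) (f : A →ₗ[R] B) :
    map I n (g ∘ₗ f) = map I n g ∘ₗ map I n f := by
  simp [map, ModuleCat.ofHom_comp]

lemma map_lsmul (n : ℕ) (r : R) :
    map I n (LinearMap.lsmul R A r) = LinearMap.lsmul R (locH I n A) r := by
  refine LinearMap.ext fun z ↦ ?_
  obtain ⟨t, x, rfl⟩ := exists_ofExt_eq z
  have hr : ModuleCat.ofHom (LinearMap.lsmul R A r) = r • 𝟙 (ModuleCat.of R A) := rfl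
  refine (map_ofExt _ x).trans ?_
  rw [hr, Ext.mk₀_smul, Ext.comp_smul, Ext.comp_mk₀_id, map_smul, LinearMap.lsmul_apply]

section LongExactSequence

variable (n : ℕ) {f : A →ₗ[R] B} {g : B →ₗ[R] D} (hf : Function.Injective f)
  (hfg : Function.Exact f g) (hg : Function.Surjective g)

include hf hfg hg

lemma shortExact_of_exact :
    (ModuleCat.shortComplexOfCompEqZero f g hfg.linearMap_comp_eq_zero).ShortExact :=
  ModuleCat.shortComplex_shortExact _ hfg hf hg

/-- The class in `Ext¹(D, A)` of a short exact sequence `0 → A → B → D → 0`. -/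
def extClass : Abelian.Ext (ModuleCat.of R D) (ModuleCat.of R A) 1 :=
  (shortExact_of_exact hf hfg hg).extClass

variable (I) in
/-- The connecting map `Hⁿ_I(D) → Hⁿ⁺¹_I(A)` of a short exact sequence `0 → A → B → D → 0`. -/
def δ : locH I n D →ₗ[R] locH I (n + 1) A :=
  yonedaProduct (extClass hf hfg hg) n

lemma exact_map_map : Function.Exact (map I n f) (map I n g) := by
  have hS := shortExact_of_exact hf hfg hg
  refine fun z ↦ ⟨fun hz ↦ ?_, ?_⟩
  · obtain ⟨t, x, rfl⟩ := exists_ofExt_eq z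
    obtain ⟨s, h, hs⟩ := exists_comp_eq_zero ((map_ofExt _ x).symm.trans hz)
    rw [← Ext.comp_assoc_of_third_deg_zero] at hs
    obtain ⟨y, hy⟩ := Ext.covariant_sequence_exact₂ _ hS _ hs
    exact ⟨ofExt I _ n s y, (map_ofExt _ y).trans ((congrArg _ hy).trans (ofExt_comp h x))⟩
  · rintro ⟨y, rfl⟩
    obtain ⟨t, x, rfl⟩ := exists_ofExt_eq y
    refine (congrArg _ (map_ofExt _ x)).trans ((map_ofExt _ _).trans ?_)
    rw [Ext.comp_assoc_of_third_deg_zero, Ext.mk₀_comp_mk₀]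
    have hS₀ : ModuleCat.ofHom f ≫ ModuleCat.ofHom g = 0 :=
      (ModuleCat.shortComplexOfCompEqZero f g hfg.linearMap_comp_eq_zero).zero
    rw [hS₀, Ext.mk₀_zero, Ext.comp_zero, map_zero]

lemma exact_map_δ : Function.Exact (map I n g) (δ I n hf hfg hg) := by
  have hS := shortExact_of_exact hf hfg hg
  refine fun z ↦ ⟨fun hz ↦ ?_, ?_⟩
  · obtain ⟨t, x, rfl⟩ := exists_ofExt_eq z
    obtain ⟨s, h, hs⟩ := exists_comp_eq_zero ((yonedaProduct_ofExt _ x).symm.trans hz)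
    rw [← Ext.comp_assoc _ _ _ (zero_add n) rfl (by lia)] at hs
    obtain ⟨y, hy⟩ := Ext.covariant_sequence_exact₃ _ hS _ rfl hs
    exact ⟨ofExt I _ n s y, (map_ofExt _ y).trans ((congrArg _ hy).trans (ofExt_comp h x))⟩
  · rintro ⟨y, rfl⟩
    obtain ⟨t, x, rfl⟩ := exists_ofExt_eq y
    refine (congrArg _ (map_ofExt _ x)).trans ((yonedaProduct_ofExt _ _).trans ?_)
    have h₀ : (Ext.mk₀ (ModuleCat.ofHom g)).comp (extClass hf hfg hg) (zero_add 1) = 0 :=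
      hS.comp_extClass
    rw [Ext.comp_assoc_of_second_deg_zero, h₀, Ext.comp_zero, map_zero]

lemma exact_δ_map : Function.Exact (δ I n hf hfg hg) (map I (n + 1) f) := by
  have hS := shortExact_of_exact hf hfg hg
  refine fun z ↦ ⟨fun hz ↦ ?_, ?_⟩
  · obtain ⟨t, x, rfl⟩ := exists_ofExt_eq z
    obtain ⟨s, h, hs⟩ := exists_comp_eq_zero ((map_ofExt _ x).symm.trans hz)
    rw [← Ext.comp_assoc_of_third_deg_zero] at hs
    obtain ⟨y, hy⟩ := Ext.covariant_sequence_exact₁ _ hS _ hs rfl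
    exact ⟨ofExt I _ n s y,
      (yonedaProduct_ofExt _ _).trans ((congrArg _ hy).trans (ofExt_comp h x))⟩
  · rintro ⟨y, rfl⟩
    obtain ⟨t, x, rfl⟩ := exists_ofExt_eq y
    refine (congrArg _ (yonedaProduct_ofExt _ _)).trans ((map_ofExt _ _).trans ?_)
    have h₀ : (extClass hf hfg hg).comp (Ext.mk₀ (ModuleCat.ofHom f)) (add_zero 1) = 0 :=
      hS.extClass_comp
    rw [Ext.comp_assoc_of_third_deg_zero, h₀, Ext.comp_zero, map_zero]

end LongExactSequence

section DegreeZero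

/-- The map `Hom(R / I ^ t, Y) → Y` evaluating at `1`. -/
def evalOne (I : Ideal R) (Y : ModuleCat.{0} R) (t : ℕ) : Abelian.Ext (quotPow I t) Y 0 →ₗ[R] Y :=
  LinearMap.applyₗ (Submodule.Quotient.mk 1 : R ⧸ I ^ t) ∘ₗ
    (Ext.linearEquiv₀ (R := R).trans ModuleCat.homLinearEquiv).toLinearMap

lemma evalOne_mk₀ {Y : ModuleCat.{0} R} {t : ℕ} (k : quotPow I t ⟶ Y) :
    evalOne I Y t (Ext.mk₀ k) = k (Submodule.Quotient.mk 1 : R ⧸ I ^ t) := by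
  have hk : Ext.linearEquiv₀ (R := R) (Ext.mk₀ k) = k := Ext.linearEquiv₀.apply_symm_apply k
  exact congrArg (fun k : quotPow I t ⟶ Y ↦ k (Submodule.Quotient.mk 1 : R ⧸ I ^ t)) hk

variable (I A) in
/-- The embedding of `H⁰_I(A)` into `A`. -/
def toModule : locH I 0 A →ₗ[R] A :=
  desc (evalOne I (ModuleCat.of R A)) fun s t h x ↦ by
    obtain ⟨k, rfl⟩ := (Ext.mk₀_bijective _ _).surjective x
    rw [Ext.mk₀_comp_mk₀, evalOne_mk₀, evalOne_mk₀]
    rfl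

lemma toModule_ofExt {t : ℕ} (k : quotPow I t ⟶ ModuleCat.of R A) :
    toModule I A (ofExt I _ 0 t (Ext.mk₀ k)) = k (Submodule.Quotient.mk 1 : R ⧸ I ^ t) :=
  (desc_ofExt ..).trans (evalOne_mk₀ k)

lemma exists_ofExt_mk₀_eq (z : locH I 0 A) :
    ∃ (t : ℕ) (k : quotPow I t ⟶ ModuleCat.of R A), ofExt I _ 0 t (Ext.mk₀ k) = z := by
  obtain ⟨t, x, rfl⟩ := exists_ofExt_eq z
  obtain ⟨k, rfl⟩ := (Ext.mk₀_bijective _ _).surjective x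
  exact ⟨t, k, rfl⟩

lemma toModule_injective : Function.Injective (toModule I A) := by
  refine (injective_iff_map_eq_zero _).2 fun z hz ↦ ?_
  obtain ⟨t, k, rfl⟩ := exists_ofExt_mk₀_eq z
  have hk : k = 0 := ModuleCat.hom_ext <| Submodule.linearMap_qext (I ^ t) <| LinearMap.ext_ring <|
    (toModule_ofExt k).symm.trans hz
  rw [hk, Ext.mk₀_zero, map_zero]

lemma range_toModule : LinearMap.range (toModule I A) = I.primaryComponent A := by
  refine le_antisymm ?_ fun m hm ↦ ?_
  · rintro _ ⟨z, rfl⟩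
    have hz : z ∈ I.primaryComponent (locH I 0 A) :=
      (primaryComponent_eq_top (I := I) (ModuleCat.of R A) 0).ge trivial
    exact I.primaryComponent_map_mem (toModule I A) ⟨z, hz⟩
  · obtain ⟨t, ht⟩ := mem_primaryComponent_iff.1 hm
    let k : R ⧸ I ^ t →ₗ[R] A := (I ^ t).liftQ (LinearMap.toSpanSingleton R A m) ht
    exact ⟨_, (toModule_ofExt (ModuleCat.ofHom k)).trans (one_smul R m)⟩

lemma toModule_map (f : A →ₗ[R] B) (z : locH I 0 A) :
    toModule I B (map I 0 f z) = f (toModule I A z) := by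
  obtain ⟨t, k, rfl⟩ := exists_ofExt_mk₀_eq z
  refine (congrArg (toModule I B) (map_ofExt _ _)).trans ?_
  rw [toModule_ofExt, Ext.mk₀_comp_mk₀, toModule_ofExt]
  rfl

end DegreeZero

section Vanishing

variable {f : A →ₗ[R] B} {g : B →ₗ[R] D} (hf : Function.Injective f) (hfg : Function.Exact f g)
  (hg : Function.Surjective g)

lemma subsingleton_of_injective {E : Type} [AddCommGroup E] [Module R E] [Module.Injective R E]
    (n : ℕ) : Subsingleton (locH I (n + 1) E) := by
  have : Injective (ModuleCat.of R E) := Module.injective_object_of_injective_module R E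
  refine subsingleton_of_forall_eq 0 fun z ↦ ?_
  obtain ⟨t, x, rfl⟩ := exists_ofExt_eq z
  rw [x.eq_zero_of_injective, map_zero]

include hg in
lemma map_zero_surjective_of_primaryComponent_eq_top (hB : I.primaryComponent B = ⊤) :
    Function.Surjective (map I 0 g) := fun z ↦ by
  obtain ⟨b, hb⟩ := hg (toModule I D z)
  obtain ⟨y, rfl⟩ : b ∈ LinearMap.range (toModule I B) := range_toModule.trans hB ▸ trivial
  exact ⟨y, toModule_injective ((toModule_map g y).trans hb)⟩

include hf hfg hg in
lemma subsingleton_of_map_surjective {n : ℕ} (h : Function.Surjective (map I n g))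
    [Subsingleton (locH I (n + 1) B)] : Subsingleton (locH I (n + 1) A) := by
  refine subsingleton_of_forall_eq 0 fun z ↦ ?_
  obtain ⟨y, rfl⟩ := (exact_δ_map n hf hfg hg z).1 (Subsingleton.elim _ _)
  exact (exact_map_δ n hf hfg hg y).2 (h y)

/- `N` embeds into an injective torsion module, and dimension shifting applies because the cokernel
is torsion again. -/
lemma subsingleton_of_primaryComponent_eq_top [IsNoetherianRing R] {N : Type} [AddCommGroup N]
    [Module R N] (hN : I.primaryComponent N = ⊤) (n : ℕ) : Subsingleton (locH I (n + 1) N) := by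
  induction n generalizing N with
  | zero =>
    obtain ⟨E, _, _, _, hE, f, hf⟩ := exists_injective_of_primaryComponent_eq_top hN
    have := subsingleton_of_injective (I := I) (E := E) 0
    have hg := (LinearMap.range f).mkQ_surjective
    exact subsingleton_of_map_surjective hf (LinearMap.exact_map_mkQ_range f) hg
      (map_zero_surjective_of_primaryComponent_eq_top hg hE)
  | succ n ih =>
    obtain ⟨E, _, _, _, hE, f, hf⟩ := exists_injective_of_primaryComponent_eq_top hN
    have := subsingleton_of_injective (I := I) (E := E) (n + 1)
    have hg := (LinearMap.range f).mkQ_surjective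
    have := ih (primaryComponent_eq_top_of_surjective hg hE)
    exact subsingleton_of_map_surjective hf (LinearMap.exact_map_mkQ_range f) hg
      (Function.surjective_to_subsingleton _)

end Vanishing

section CokernelSequence

variable (n : ℕ) {f : A →ₗ[R] B} {g : B →ₗ[R] D}

lemma map_rangeRestrict_surjective [Subsingleton (locH I (n + 1) (LinearMap.ker f))] :
    Function.Surjective (map I n f.rangeRestrict) := by
  have hex := exact_map_δ (I := I) n (LinearMap.ker f).subtype_injective
    (exact_subtype_rangeRestrict f) f.surjective_rangeRestrict
  exact (LinearMap.surjective_iff_eq_zero_of_exact hex).2 (Subsingleton.elim _ _)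

lemma map_rangeRestrict_bijective [Subsingleton (locH I n (LinearMap.ker f))]
    [Subsingleton (locH I (n + 1) (LinearMap.ker f))] :
    Function.Bijective (map I n f.rangeRestrict) := by
  have hex := exact_map_map (I := I) n (LinearMap.ker f).subtype_injective
    (exact_subtype_rangeRestrict f) f.surjective_rangeRestrict
  exact ⟨(LinearMap.injective_iff_eq_zero_of_exact hex).2 (Subsingleton.elim _ _),
    map_rangeRestrict_surjective n⟩

lemma exists_exact (hfg : Function.Exact f g) (hg : Function.Surjective g)
    [Subsingleton (locH I (n + 1) (LinearMap.ker f))]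
    [Subsingleton (locH I (n + 2) (LinearMap.ker f))] :
    ∃ d : locH I n D →ₗ[R] locH I (n + 1) A, Function.Exact (map I n f) (map I n g) ∧
      Function.Exact (map I n g) d ∧ Function.Exact d (map I (n + 1) f) := by
  have hι := (LinearMap.range f).subtype_injective
  have hιg : Function.Exact (LinearMap.range f).subtype g :=
    LinearMap.exact_iff.2 (hfg.linearMap_ker_eq.trans (Submodule.range_subtype _).symm)
  have hmap (i : ℕ) : map I i f = map I i (LinearMap.range f).subtype ∘ₗ map I i f.rangeRestrict :=
    map_comp i (LinearMap.range f).subtype f.rangeRestrict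
  let e := LinearEquiv.ofBijective _ (map_rangeRestrict_bijective (I := I) (n + 1) (f := f))
  refine ⟨e.symm.toLinearMap ∘ₗ δ I n hι hιg hg, ?_, ?_, ?_⟩
  · rw [hmap, (map_rangeRestrict_surjective n).comp_exact_iff_exact]
    exact exact_map_map n hι hιg hg
  · rw [LinearEquiv.postcomp_exact_iff_exact]
    exact exact_map_δ n hι hιg hg
  · rw [hmap]
    exact (LinearEquiv.conj_symm_exact_iff_exact _ _ e).2 (exact_δ_map n hι hιg hg)

lemma exists_exact_lsmul (x : R)
    [Subsingleton (locH I (n + 1) (LinearMap.ker (LinearMap.lsmul R A x)))]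
    [Subsingleton (locH I (n + 2) (LinearMap.ker (LinearMap.lsmul R A x)))] :
    ∃ (p : locH I n A →ₗ[R] locH I n (QuotSMulTop x A))
      (d : locH I n (QuotSMulTop x A) →ₗ[R] locH I (n + 1) A),
      Function.Exact (LinearMap.lsmul R (locH I n A) x) p ∧ Function.Exact p d ∧
        Function.Exact d (LinearMap.lsmul R (locH I (n + 1) A) x) := by
  obtain ⟨d, h⟩ := exists_exact (I := I) n (LinearMap.exact_lsmul_mkQ_smul_top A x)
    (Submodule.mkQ_surjective _)
  rw [map_lsmul, map_lsmul] at h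
  exact ⟨_, d, h⟩

end CokernelSequence

end locH

end LocalCohomology

lemma span_range_le {R ι : Type*} [CommRing R] {x : ι → R} {J : Ideal R} (hx : ∀ j, x j ∈ J) :
    Ideal.span (Set.range x) ≤ J :=
  Ideal.span_le.2 (Set.range_subset_iff.2 hx)

section RelativeSystemOfParameters

variable {I : Ideal R} {N P : Type} [AddCommGroup N] [Module R N] [AddCommGroup P] [Module R P]

lemma isRsop_iff {c : ℕ} {x : Fin c → R} : IsRsop I N x ↔
    (∀ j, x j ∈ I) ∧ I ≤ (Ideal.span (Set.range x) ⊔ Module.annihilator R N).radical := by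
  refine and_congr_right fun hx ↦ ⟨fun h ↦ ?_, fun h ↦ le_antisymm ?_ ?_⟩
  · exact (le_sup_left.trans Ideal.le_radical).trans h.ge
  · exact Ideal.radical_mono (sup_le_sup_right (span_range_le hx) _)
  · exact Ideal.radical_le_radical_iff.2 (sup_le h (le_sup_right.trans Ideal.le_radical))

namespace IsRsop

lemma of_annihilator_le {c : ℕ} {x : Fin c → R} (hx : IsRsop I N x)
    (hP : Module.annihilator R N ≤ Module.annihilator R P) : IsRsop I P x :=
  isRsop_iff.2 ⟨hx.1, (isRsop_iff.1 hx).2.trans (Ideal.radical_mono (sup_le_sup_left hP _))⟩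

lemma pow {c : ℕ} {x : Fin c → R} (hx : IsRsop I N x) {n : Fin c → ℕ} (hn : ∀ j, 0 < n j) :
    IsRsop I N fun j ↦ x j ^ n j := by
  refine isRsop_iff.2 ⟨fun j ↦ I.pow_mem_of_mem (hx.1 j) _ (hn j), (isRsop_iff.1 hx).2.trans
    (Ideal.radical_le_radical_iff.2 (sup_le (span_range_le fun j ↦ ⟨n j, ?_⟩)
      (le_sup_right.trans Ideal.le_radical)))⟩
  exact Ideal.mem_sup_left (Ideal.subset_span ⟨j, rfl⟩)

lemma tail {k : ℕ} {x : Fin (k + 1) → R} (hx : IsRsop I N x)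
    (hP : Module.annihilator R N ≤ Module.annihilator R P)
    (hx₀ : x 0 ∈ (Ideal.span (Set.range (Fin.tail x)) ⊔ Module.annihilator R P).radical) :
    IsRsop I P (Fin.tail x) := by
  refine isRsop_iff.2 ⟨fun j ↦ hx.1 j.succ, (isRsop_iff.1 hx).2.trans
    (Ideal.radical_le_radical_iff.2 (sup_le (span_range_le (Fin.cases hx₀ fun j ↦ ?_))
      (hP.trans (le_sup_right.trans Ideal.le_radical))))⟩
  exact Ideal.le_radical (Ideal.mem_sup_left (Ideal.subset_span ⟨j, rfl⟩))

lemma tail_ker {k : ℕ} {x : Fin (k + 1) → R} (hx : IsRsop I N x) :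
    IsRsop I (LinearMap.ker (LinearMap.lsmul R N (x 0))) (Fin.tail x) :=
  hx.tail (LinearMap.annihilator_le_of_injective _ (Submodule.subtype_injective _)) <|
    Ideal.le_radical <| Ideal.mem_sup_right <| Module.mem_annihilator.2 fun m ↦ Subtype.ext m.2

lemma tail_quotSMulTop {k : ℕ} {x : Fin (k + 1) → R} (hx : IsRsop I N x) :
    IsRsop I (QuotSMulTop (x 0) N) (Fin.tail x) :=
  hx.tail (LinearMap.annihilator_le_of_surjective _ (Submodule.mkQ_surjective _)) <|
    Ideal.le_radical <| Ideal.mem_sup_right <| QuotSMulTop.mem_annihilator N (x 0)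

variable [IsNoetherianRing R]

lemma primaryComponent_eq_top {x : Fin 0 → R} (hx : IsRsop I N x) :
    I.primaryComponent N = ⊤ := by
  have hI := (isRsop_iff.1 hx).2
  rw [Set.range_eq_empty, Ideal.span_empty, bot_sup_eq] at hI
  obtain ⟨t, ht⟩ := Ideal.exists_pow_le_of_le_radical_of_fg hI (IsNoetherian.noetherian I)
  exact Submodule.eq_top_iff'.2 fun m ↦ mem_primaryComponent_iff.2
    ⟨t, fun r hr ↦ Module.mem_annihilator.1 (ht hr) m⟩

lemma subsingleton_locH {k : ℕ} {x : Fin k → R} (hx : IsRsop I N x) {i : ℕ} (hi : k ≤ i) :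
    Subsingleton (locH I (i + 1) N) := by
  induction k generalizing N i with
  | zero => exact locH.subsingleton_of_primaryComponent_eq_top hx.primaryComponent_eq_top i
  | succ k ih =>
    have := ih hx.tail_ker (Nat.le_of_succ_le hi)
    have := ih hx.tail_ker (Nat.le_succ_of_le (Nat.le_of_succ_le hi))
    obtain ⟨i, rfl⟩ := Nat.exists_eq_succ_of_ne_zero (Nat.ne_zero_of_lt hi)
    have := ih hx.tail_quotSMulTop (Nat.le_of_succ_le_succ hi)
    obtain ⟨p, d, -, -, hd⟩ := locH.exists_exact_lsmul (I := I) (A := N) (i + 1) (x 0)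
    have hreg : IsSMulRegular (locH I (i + 2) N) (x 0) :=
      (LinearMap.injective_iff_eq_zero_of_exact hd).2 (Subsingleton.elim _ _)
    refine subsingleton_of_forall_eq 0 fun z ↦ ?_
    have hz : z ∈ I.primaryComponent (locH I (i + 2) N) :=
      (locH.primaryComponent_eq_top (ModuleCat.of R N) (i + 2)).ge trivial
    obtain ⟨t, ht⟩ := mem_primaryComponent_iff.1 hz
    exact (hreg.pow t).right_eq_zero_of_smul (ht _ (Ideal.pow_mem_pow (hx.1 0) t))

lemma surjective_smul_locH {k : ℕ} {x : Fin (k + 1) → R} (hx : IsRsop I N x) :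
    Function.Surjective (LinearMap.lsmul R (locH I (k + 1) N) (x 0)) := by
  have := hx.tail_ker.subsingleton_locH (k.le_add_right 1)
  have := hx.tail_ker.subsingleton_locH (k.le_add_right 2)
  have := hx.tail_quotSMulTop.subsingleton_locH le_rfl
  obtain ⟨p, d, hp, -, -⟩ := locH.exists_exact_lsmul (I := I) (A := N) (k + 1) (x 0)
  exact (LinearMap.surjective_iff_eq_zero_of_exact hp).2 (Subsingleton.elim _ _)

lemma subsingleton_locH_of_finite {k : ℕ} {x : Fin (k + 1) → R} (hx : IsRsop I N x)
    (hI : I ≤ (⊥ : Ideal R).jacobson) [hfin : Module.Finite R (locH I (k + 1) N)] :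
    Subsingleton (locH I (k + 1) N) := by
  refine (Submodule.subsingleton_iff R).1 (subsingleton_of_bot_eq_top (Eq.symm ?_))
  refine Submodule.eq_bot_of_le_smul_of_le_jacobson_bot I _ hfin.fg_top ?_ hI
  refine fun z _ ↦ ?_
  obtain ⟨w, rfl⟩ := hx.surjective_smul_locH z
  exact Submodule.smul_mem_smul (hx.1 0) trivial

end IsRsop

lemma exists_isRsop {c : ℕ} (hc : IsAra I N c) : ∃ x : Fin c → R, IsRsop I N x := by
  obtain ⟨x, hx⟩ := hc.1
  have hmem (j : Fin c) : ∃ a ∈ I, ∃ n, ∃ b ∈ Module.annihilator R N, a + b = x j ^ n := by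
    obtain ⟨n, hn⟩ : x j ∈ (I ⊔ Module.annihilator R N).radical :=
      hx.le (Ideal.le_radical (Ideal.mem_sup_left (Ideal.subset_span ⟨j, rfl⟩)))
    obtain ⟨a, ha, b, hb, hab⟩ := Submodule.mem_sup.1 hn
    exact ⟨a, ha, n, b, hb, hab⟩
  choose a ha n b hb hab using hmem
  refine ⟨a, isRsop_iff.2 ⟨ha, (le_sup_left.trans Ideal.le_radical).trans (hx.ge.trans ?_)⟩⟩
  refine Ideal.radical_le_radical_iff.2 (sup_le (span_range_le fun j ↦ ⟨n j, ?_⟩)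
    (le_sup_right.trans Ideal.le_radical))
  rw [← hab j]
  exact add_mem (Ideal.mem_sup_left (Ideal.subset_span ⟨j, rfl⟩)) (Ideal.mem_sup_right (hb j))

end RelativeSystemOfParameters

section LocalCohomologyAnnihilators

variable {I : Ideal R} {M : Type} [AddCommGroup M] [Module R M]

lemma annihilator_locH_zero :
    Module.annihilator R (locH I 0 M) = Module.annihilator R (I.primaryComponent M) := by
  rw [← locH.range_toModule]
  exact (LinearEquiv.ofInjective _ locH.toModule_injective).annihilator_eq

lemma annihilator_locH_mul_le [IsNoetherianRing R] {x : R}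
    (hx : LinearMap.ker (LinearMap.lsmul R M x) ≤ I.primaryComponent M) (i : ℕ) :
    Module.annihilator R (locH I i M) * Module.annihilator R (locH I (i + 1) M) ≤
      Module.annihilator R (locH I i (QuotSMulTop x M)) := by
  have hker := primaryComponent_eq_top_of_le hx
  have := locH.subsingleton_of_primaryComponent_eq_top hker i
  have := locH.subsingleton_of_primaryComponent_eq_top hker (i + 1)
  obtain ⟨p, d, -, hpd, -⟩ := locH.exists_exact_lsmul (I := I) (A := M) i x
  exact annihilator_mul_annihilator_le_of_exact hpd

end LocalCohomologyAnnihilators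

section WeakSequences

open scoped Pointwise

variable {J : Ideal R} {M : Type} [AddCommGroup M] [Module R M] {k : ℕ}

lemma pSpan_zero (x : Fin (k + 1) → R) : pSpan M x 0 = ⊥ := by
  simp [pSpan]

lemma pSpan_succ (x : Fin (k + 1) → R) (j : Fin k) : pSpan M x j.succ =
    (pSpan (QuotSMulTop (x 0) M) (Fin.tail x) j).comap (Submodule.mkQ (x 0 • ⊤)) := by
  have himage : x '' {i | i < j.succ} = insert (x 0) (Fin.tail x '' {i | i < j}) := by
    ext r
    simp [Fin.exists_fin_succ, Fin.tail, eq_comm]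
  have hmap : pSpan (QuotSMulTop (x 0) M) (Fin.tail x) j =
      (Ideal.span (Fin.tail x '' {i | i < j}) • (⊤ : Submodule R M)).map
        (Submodule.mkQ (x 0 • ⊤)) := by
    rw [Submodule.map_smul'', Submodule.map_top, Submodule.range_mkQ, pSpan]
  rw [hmap, Submodule.comap_map_mkQ, pSpan, himage, Ideal.span_insert, Submodule.sup_smul,
    Submodule.ideal_span_singleton_smul]

lemma isWeakSeq_succ_iff {x : Fin (k + 1) → R} : IsWeakSeq J M x ↔
    J ≤ Module.annihilator R (LinearMap.ker (LinearMap.lsmul R M (x 0))) ∧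
      IsWeakSeq J (QuotSMulTop (x 0) M) (Fin.tail x) := by
  refine Fin.forall_fin_succ.trans (and_congr ?_ (forall_congr' fun j ↦ ?_))
  · simp only [pSpan_zero, Submodule.mem_bot]
    exact ⟨fun h a ha ↦ Module.mem_annihilator.2 fun m ↦ Subtype.ext (h m m.2 a ha),
      fun h m hm a ha ↦ congrArg Subtype.val (Module.mem_annihilator.1 (h ha) ⟨m, hm⟩)⟩
  · rw [(Submodule.mkQ_surjective _).forall]
    simp only [pSpan_succ, Submodule.mem_comap, map_smul]
    rfl

/-- Every sequence of positive powers of the terms of `x` is a `J`-weak sequence on `M`. Unlike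
`IsUncondWeakSeq`, the order of the terms is fixed. -/
def IsPowWeakSeq (J : Ideal R) (M : Type) [AddCommGroup M] [Module R M] (x : Fin k → R) : Prop :=
  ∀ n : Fin k → ℕ, (∀ j, 0 < n j) → IsWeakSeq J M fun j ↦ x j ^ n j

namespace IsPowWeakSeq

variable {x : Fin (k + 1) → R}

lemma le_annihilator_ker (hx : IsPowWeakSeq J M x) {a : ℕ} (ha : 0 < a) :
    J ≤ Module.annihilator R (LinearMap.ker (LinearMap.lsmul R M (x 0 ^ a))) :=
  (isWeakSeq_succ_iff.1 (hx (fun _ ↦ a) fun _ ↦ ha)).1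

lemma tail (hx : IsPowWeakSeq J M x) {a : ℕ} (ha : 0 < a) :
    IsPowWeakSeq J (QuotSMulTop (x 0 ^ a) M) (Fin.tail x) := fun n hn ↦
  (isWeakSeq_succ_iff.1 (hx (Fin.cons a n) (Fin.cases ha hn))).2

end IsPowWeakSeq

variable {I : Ideal R}

namespace IsPowWeakSeq

variable {ℓ : ℕ}

lemma ker_le_primaryComponent {x : Fin (k + 1) → R} (hx : IsPowWeakSeq (I ^ ℓ) M x) {a : ℕ}
    (ha : 0 < a) : LinearMap.ker (LinearMap.lsmul R M (x 0 ^ a)) ≤ I.primaryComponent M :=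
  fun m hm ↦ mem_primaryComponent_iff.2 ⟨ℓ, fun _ hr ↦
    congrArg Subtype.val (Module.mem_annihilator.1 (hx.le_annihilator_ker ha hr) ⟨m, hm⟩)⟩

variable [IsNoetherianRing R]

lemma exists_exact {x : Fin (k + 1) → R} (hx : IsPowWeakSeq (I ^ ℓ) M x) {a : ℕ} (ha : 0 < a)
    (i : ℕ) : ∃ d : locH I i (QuotSMulTop (x 0 ^ a) M) →ₗ[R] locH I (i + 1) M,
      Function.Exact d (LinearMap.lsmul R (locH I (i + 1) M) (x 0 ^ a)) := by
  have hker := primaryComponent_eq_top_of_le (hx.ker_le_primaryComponent ha)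
  have := locH.subsingleton_of_primaryComponent_eq_top hker i
  have := locH.subsingleton_of_primaryComponent_eq_top hker (i + 1)
  obtain ⟨p, d, -, -, hd⟩ := locH.exists_exact_lsmul (I := I) (A := M) i (x 0 ^ a)
  exact ⟨d, hd⟩

lemma pow_le_annihilator_locH {x : Fin k → R} (hx : IsPowWeakSeq (I ^ ℓ) M x)
    (hxI : ∀ j, x j ∈ I) {i : ℕ} (hi : i < k) : I ^ ℓ ≤ Module.annihilator R (locH I i M) := by
  obtain ⟨k, rfl⟩ := Nat.exists_eq_succ_of_ne_zero (Nat.ne_zero_of_lt hi)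
  induction i generalizing M k with
  | zero =>
    rw [annihilator_locH_zero]
    exact le_annihilator_of_forall_ker_pow (hxI 0) fun n hn ↦ hx.le_annihilator_ker hn
  | succ i ih =>
    rw [← Submodule.annihilator_top, ← locH.primaryComponent_eq_top (ModuleCat.of R M) (i + 1)]
    refine le_annihilator_of_forall_ker_pow (hxI 0) fun n hn ↦ ?_
    obtain ⟨d, hd⟩ := hx.exists_exact hn i
    obtain ⟨k, rfl⟩ := Nat.exists_eq_succ_of_ne_zero (Nat.ne_zero_of_lt (Nat.succ_lt_succ_iff.1 hi))
    exact (ih k (hx.tail hn) (fun j ↦ hxI j.succ) (Nat.lt_of_succ_lt_succ hi)).trans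
      (annihilator_le_annihilator_ker_of_exact hd)

lemma finite_locH [Module.Finite R M] {x : Fin k → R} (hx : IsPowWeakSeq (I ^ ℓ) M x)
    (hxI : ∀ j, x j ∈ I) {i : ℕ} (hi : i < k) : Module.Finite R (locH I i M) := by
  induction i generalizing M k with
  | zero => exact Module.Finite.of_injective _ locH.toModule_injective
  | succ i ih =>
    obtain ⟨k, rfl⟩ := Nat.exists_eq_succ_of_ne_zero (Nat.ne_zero_of_lt hi)
    have hmem : x 0 ^ (ℓ + 1) ∈ I ^ ℓ :=
      Ideal.pow_le_pow_right ℓ.le_succ (Ideal.pow_mem_pow (hxI 0) (ℓ + 1))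
    obtain ⟨d, hd⟩ := hx.exists_exact ℓ.succ_pos i
    have hzero : LinearMap.lsmul R (locH I (i + 1) M) (x 0 ^ (ℓ + 1)) = 0 :=
      LinearMap.ext (Module.mem_annihilator.1 (hx.pow_le_annihilator_locH hxI hi hmem))
    have := ih (hx.tail ℓ.succ_pos) (fun j ↦ hxI j.succ) (Nat.lt_of_succ_lt_succ hi)
    exact Module.Finite.of_surjective d ((LinearMap.surjective_iff_eq_zero_of_exact hd).2 hzero)

end IsPowWeakSeq

end WeakSequences

section TorsionCriterion

open scoped Pointwise

variable {I : Ideal R} {M : Type} [AddCommGroup M] [Module R M]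

lemma annihilator_locH_le_quotient_primaryComponent [IsNoetherianRing R] (i : ℕ) :
    Module.annihilator R (locH I i M) ≤
      Module.annihilator R (locH I i (M ⧸ I.primaryComponent M)) := by
  have := locH.subsingleton_of_primaryComponent_eq_top
    (primaryComponent_eq_top_of_le (le_refl (I.primaryComponent M))) i
  have hex := locH.exact_map_δ (I := I) i (Submodule.subtype_injective _)
    (LinearMap.exact_subtype_mkQ (I.primaryComponent M)) (Submodule.mkQ_surjective _)
  exact LinearMap.annihilator_le_of_surjective _
    ((LinearMap.surjective_iff_eq_zero_of_exact hex).2 (Subsingleton.elim _ _))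

lemma annihilator_locH_zero_eq_top (hM : I.primaryComponent M = ⊥) :
    Module.annihilator R (locH I 0 M) = ⊤ := by
  rw [annihilator_locH_zero, hM]
  exact Submodule.annihilator_bot

variable {N : Submodule R M} {k : ℕ}

lemma IsRsop.tail_map_mkQ {y : Fin (k + 1) → R} (hy : IsRsop I N y) {w : R}
    (hw : y 0 - w ∈ Ideal.span (Set.range (Fin.tail y)) ⊔ Module.annihilator R N) (n : ℕ) :
    IsRsop I (N.map (Submodule.mkQ (w ^ n • ⊤ : Submodule R M))) (Fin.tail y) := by
  set f := Submodule.mkQ (w ^ n • ⊤ : Submodule R M)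
  have hann : Module.annihilator R N ≤ Module.annihilator R (N.map f) :=
    LinearMap.annihilator_le_of_surjective _ (f.submoduleMap_surjective N)
  have hpow : w ^ n ∈ Module.annihilator R (N.map f) :=
    LinearMap.annihilator_le_of_injective _ (N.map f).subtype_injective
      (QuotSMulTop.mem_annihilator M (w ^ n))
  refine hy.tail hann ?_
  rw [← sub_add_cancel (y 0) w]
  exact add_mem (Ideal.le_radical (sup_le_sup_left hann _ hw)) ⟨n, Ideal.mem_sup_right hpow⟩

variable [IsNoetherianRing R]

lemma exists_pow_le_annihilator_locH_quotSMulTop {w : R}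
    (hw : LinearMap.ker (LinearMap.lsmul R M w) ≤ I.primaryComponent M)
    (hM : ∀ i ≤ k + 1, ∃ t, I ^ t ≤ Module.annihilator R (locH I i M)) (i : ℕ) (hi : i ≤ k) :
    ∃ t, I ^ t ≤ Module.annihilator R (locH I i (QuotSMulTop w M)) := by
  obtain ⟨s, hs⟩ := hM i (Nat.le_succ_of_le hi)
  obtain ⟨t, ht⟩ := hM (i + 1) (Nat.succ_le_succ hi)
  refine ⟨s + t, ?_⟩
  rw [pow_add]
  exact (Ideal.mul_mono hs ht).trans (annihilator_locH_mul_le hw i)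

lemma annihilator_locH_one_le {w : R} (hM : I.primaryComponent M = ⊥) (hw : IsSMulRegular M w) :
    Module.annihilator R (locH I 1 M) ≤
      Module.annihilator R (I.primaryComponent (QuotSMulTop w M)) := by
  have hker := (isSMulRegular_iff_ker_lsmul_eq_bot M w).1 hw
  have hmul := annihilator_locH_mul_le (hker.trans_le (bot_le (a := I.primaryComponent M))) 0
  rwa [annihilator_locH_zero_eq_top hM, Ideal.top_mul, annihilator_locH_zero] at hmul

lemma IsRsop.exists_isSMulRegular_sub_mem [Module.Finite R M] {y : Fin (k + 1) → R}
    (hy : IsRsop I N y) (hM : I.primaryComponent M = ⊥) :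
    ∃ w ∈ I, IsSMulRegular M w ∧
      y 0 - w ∈ Ideal.span (Set.range (Fin.tail y)) ⊔ Module.annihilator R N := by
  have htail : Ideal.span (Set.range (Fin.tail y)) ≤ I :=
    span_range_le fun j ↦ hy.1 j.succ
  have hspan : Ideal.span (Set.range y) ≤ I := span_range_le hy.1
  have hI : I ≤ (Ideal.span {y 0} ⊔
      (Ideal.span (Set.range (Fin.tail y)) ⊔ Module.annihilator R N ⊓ I)).radical := by
    rw [← sup_assoc, ← Ideal.span_union, Set.singleton_union, ← Fin.range_cons,
      Fin.cons_self_tail, ← sup_inf_assoc_of_le _ hspan, Ideal.radical_inf]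
    exact le_inf (isRsop_iff.1 hy).2 Ideal.le_radical
  obtain ⟨a, ha, hreg⟩ := exists_isSMulRegular_add hM hI
  refine ⟨y 0 + a, I.add_mem (hy.1 0) (sup_le htail inf_le_right ha), hreg, ?_⟩
  rw [sub_add_cancel_left]
  have hle : Ideal.span (Set.range (Fin.tail y)) ⊔ Module.annihilator R N ⊓ I ≤
      Ideal.span (Set.range (Fin.tail y)) ⊔ Module.annihilator R N :=
    sup_le_sup_left inf_le_left _
  exact neg_mem (hle ha)

variable [Module.Finite R M] (hI : I ≤ (⊥ : Ideal R).jacobson)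

include hI

lemma eq_bot_of_forall_map_mkQ_le_primaryComponent (hM : I.primaryComponent M = ⊥) {t : ℕ}
    (ht : I ^ t ≤ Module.annihilator R (locH I 1 M)) {w : R} (hwI : w ∈ I)
    (hw : IsSMulRegular M w) (hN : ∀ n, N.map (Submodule.mkQ (w ^ n • ⊤)) ≤
      I.primaryComponent (QuotSMulTop (w ^ n) M)) : N = ⊥ := by
  refine eq_bot_iff.2 fun m hm ↦ hM ▸ mem_primaryComponent_iff.2 ⟨t, fun r hr ↦ ?_⟩
  refine eq_zero_of_forall_mem_pow_smul_top hI hwI fun n ↦ (Submodule.Quotient.mk_eq_zero _).1 ?_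
  exact Submodule.mem_annihilator.1 (annihilator_locH_one_le hM (hw.pow n) (ht hr)) _
    (hN n (Submodule.mem_map_of_mem hm))

lemma IsRsop.le_primaryComponent {y : Fin k → R} (hy : IsRsop I N y)
    (hM : ∀ i ≤ k, ∃ t, I ^ t ≤ Module.annihilator R (locH I i M)) :
    N ≤ I.primaryComponent M := by
  induction k generalizing M with
  | zero =>
    exact fun m hm ↦ I.primaryComponent_map_mem N.subtype
      ⟨⟨m, hm⟩, hy.primaryComponent_eq_top ▸ trivial⟩
  | succ k ih =>
    set f := Submodule.mkQ (I.primaryComponent M)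
    have hy' : IsRsop I (N.map f) y := hy.of_annihilator_le
      (LinearMap.annihilator_le_of_surjective _ (f.submoduleMap_surjective N))
    have hbot : I.primaryComponent (M ⧸ I.primaryComponent M) = ⊥ :=
      primaryComponent_quotient_primaryComponent
    have hM' (i : ℕ) (hi : i ≤ k + 1) :
        ∃ t, I ^ t ≤ Module.annihilator R (locH I i (M ⧸ I.primaryComponent M)) :=
      (hM i hi).imp fun t ht ↦ ht.trans (annihilator_locH_le_quotient_primaryComponent i)
    obtain ⟨w, hwI, hw, hyw⟩ := hy'.exists_isSMulRegular_sub_mem hbot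
    obtain ⟨t, ht⟩ := hM' 1 (Nat.le_add_left 1 k)
    have hN : N.map f = ⊥ := by
      refine eq_bot_of_forall_map_mkQ_le_primaryComponent hI hbot ht hwI hw fun n ↦
        ih (hy'.tail_map_mkQ hyw n) (exists_pow_le_annihilator_locH_quotSMulTop ?_ hM')
      exact ((isSMulRegular_iff_ker_lsmul_eq_bot _ _).1 (hw.pow n)).trans_le bot_le
    exact (LinearMap.le_ker_iff_map.2 hN).trans_eq (Submodule.ker_mkQ _)

lemma IsRsop.isWeakSeq {c t : ℕ} {x : Fin c → R} (hx : IsRsop I M x)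
    (hM : ∀ i < c, I ^ t ≤ Module.annihilator R (locH I i M)) :
    IsWeakSeq (I ^ (2 ^ c * t)) M x := by
  induction c generalizing M t with
  | zero => exact fun i ↦ i.elim0
  | succ c ih =>
    have hker : LinearMap.ker (LinearMap.lsmul R M (x 0)) ≤ I.primaryComponent M :=
      hx.tail_ker.le_primaryComponent hI fun i hi ↦ ⟨t, hM i (Nat.lt_succ_of_le hi)⟩
    refine isWeakSeq_succ_iff.2 ⟨?_, ?_⟩
    · calc
        I ^ (2 ^ (c + 1) * t) ≤ I ^ t :=
          Ideal.pow_le_pow_right (Nat.le_mul_of_pos_left t (by positivity))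
        _ ≤ Module.annihilator R (I.primaryComponent M) :=
          (hM 0 c.succ_pos).trans_eq annihilator_locH_zero
        _ ≤ _ := Submodule.annihilator_mono hker
    · rw [pow_succ, mul_assoc, two_mul]
      refine ih hx.tail_quotSMulTop fun i hi ↦ ?_
      rw [pow_add]
      exact (Ideal.mul_mono (hM i (Nat.lt_succ_of_lt hi)) (hM (i + 1) (Nat.succ_lt_succ hi))).trans
        (annihilator_locH_mul_le hker i)

end TorsionCriterion

section FinitenessDimension

variable {I : Ideal R} {M : Type} [AddCommGroup M] [Module R M] {c : ℕ}

lemma IsCd.unique {d : ℕ} (hc : IsCd I M c) (hd : IsCd I M d) : c = d :=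
  le_antisymm (not_lt.1 fun h ↦ not_subsingleton_iff_nontrivial.2 hc.1 (hd.2 c h))
    (not_lt.1 fun h ↦ not_subsingleton_iff_nontrivial.2 hd.1 (hc.2 d h))

lemma IsRelGCM.finite_locH (hM : IsRelGCM I M) (hc : IsCd I M c) {i : ℕ} (hi : i < c) :
    Module.Finite R (locH I i M) := by
  obtain hM | ⟨d, hd, hfin⟩ := hM
  · exact absurd (hM c (Nat.zero_lt_of_lt hi)) (not_subsingleton_iff_nontrivial.2 hc.1)
  · exact hfin.1 i (hc.unique hd ▸ hi)

lemma exists_pow_le_annihilator_locH (hM : ∀ i < c, Module.Finite R (locH I i M)) :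
    ∃ t, ∀ i < c, I ^ t ≤ Module.annihilator R (locH I i M) := by
  have hpow (i : Fin c) : ∃ t, I ^ t ≤ Module.annihilator R (locH I i M) := by
    have := hM i i.2
    exact exists_pow_le_annihilator (locH.primaryComponent_eq_top (ModuleCat.of R M) i)
  choose t ht using hpow
  exact ⟨Finset.univ.sup t, fun i hi ↦
    (Ideal.pow_le_pow_right (Finset.le_sup (Finset.mem_univ _))).trans (ht ⟨i, hi⟩)⟩

variable [IsNoetherianRing R] [Module.Finite R M] (hI : I ≤ (⊥ : Ideal R).jacobson)

include hI

lemma exists_forall_isWeakSeq (hM : ∀ i < c, Module.Finite R (locH I i M)) :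
    ∃ ℓ, ∀ x : Fin c → R, IsRsop I M x → IsWeakSeq (I ^ ℓ) M x := by
  obtain ⟨t, ht⟩ := exists_pow_le_annihilator_locH hM
  exact ⟨2 ^ c * t, fun x hx ↦ hx.isWeakSeq hI ht⟩

lemma IsRsop.isFinDim {x : Fin (c + 1) → R} (hx : IsRsop I M x)
    [Nontrivial (locH I (c + 1) M)] {ℓ : ℕ}
    (hweak : ∀ y : Fin (c + 1) → R, IsRsop I M y → IsWeakSeq (I ^ ℓ) M y) :
    IsFinDim I M (c + 1) := by
  have hpow : IsPowWeakSeq (I ^ ℓ) M x := fun n hn ↦ hweak _ (hx.pow hn)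
  exact ⟨fun i hi ↦ hpow.finite_locH hx.1 hi, fun _ ↦
    not_subsingleton (locH I (c + 1) M) (hx.subsingleton_locH_of_finite hI)⟩

end FinitenessDimension

/-- **Proposition 3.5.** Suppose `I` is contained in the Jacobson radical of `R` and
`cd(I,M) = ara(I,M)`. Then `M` is `I`-relative generalized Cohen-Macaulay if and only if
there is an `ℓ` such that every `I`-relative system of parameters of `M` is an `I^ℓ`-weak
sequence on `M`. -/
theorem proposition_3_5 [IsNoetherianRing R] (I : Ideal R)
    (hjac : I ≤ (⊥ : Ideal R).jacobson)
    (M : Type) [AddCommGroup M] [Module R M] [Module.Finite R M]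
    (c : ℕ) (hc : IsCd I M c) (ha : IsAra I M c) :
    IsRelGCM I M ↔
      ∃ ℓ : ℕ, ∀ x : Fin c → R, IsRsop I M x → IsWeakSeq (I ^ ℓ) M x := by
  refine ⟨fun hM ↦ exists_forall_isWeakSeq hjac fun i hi ↦ hM.finite_locH hc hi, ?_⟩
  rintro ⟨ℓ, hweak⟩
  obtain _ | c := c
  · exact Or.inl hc.2
  obtain ⟨x, hx⟩ := exists_isRsop ha
  have := hc.1
  exact Or.inr ⟨c + 1, hc, hx.isFinDim hjac hweak⟩
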